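/- arXiv:2003.05064 — 6 statements merged into one kernel-verified Lean document; each statement's English description precedes it below -/
import Mathlib

section
/- If C is a self-dual code of length n over F₂+uF₂, then its Gray image φ(C) (an F₂-subspace of F₂^{2n}) is a self-dual binary code of length 2n. -/
/-- The four-element ring `F₂ + uF₂ = F₂[u]`, `u² = 0`: the dual numbers over `ZMod 2`. -/
abbrev F2u : Type := DualNumber (ZMod 2)

/-- The Euclidean dual of a set of vectors `C ⊆ Rⁿ`:
`C⊥ = {x : ∀ y ∈ C, ⟨x,y⟩ = 0}` where `⟨x,y⟩ = ∑ xᵢyᵢ`. -/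
def dualCode {R : Type*} [CommRing R] {ι : Type*} [Fintype ι] (C : Set (ι → R)) :
    Set (ι → R) :=
  {x | ∀ y ∈ C, ∑ i, x i * y i = 0}

/-- The Gray map `φ : (F₂+uF₂)ⁿ → F₂^{2n}`, sending `x = ā + b̄u` to `(b̄, ā + b̄)`. -/
def grayMap (n : ℕ) (x : Fin n → F2u) : (Fin n ⊕ Fin n) → ZMod 2 :=
  Sum.elim (fun i => (x i).snd) (fun i => (x i).fst + (x i).snd)

open DualNumber

/-- The linear form `a + bε ↦ a + b` on the dual numbers. In characteristic two it turns the
product into the inner product of Gray images, and no nonzero ideal lies in its kernel. -/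
def grayForm (R : Type*) [CommSemiring R] : R[ε] →ₗ[R] R :=
  (TrivSqZeroExt.fstHom R R R).toLinearMap + TrivSqZeroExt.sndHom R R

theorem grayForm_apply {R : Type*} [CommSemiring R] (z : R[ε]) :
    grayForm R z = z.fst + z.snd :=
  rfl

theorem grayForm_mul {R : Type*} [CommRing R] [CharP R 2] (z w : R[ε]) :
    grayForm R (z * w) = z.snd * w.snd + (z.fst + z.snd) * (w.fst + w.snd) := by
  rw [grayForm_apply, TrivSqZeroExt.fst_mul, DualNumber.snd_mul]
  linear_combination -(CharTwo.add_self_eq_zero (z.snd * w.snd))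

theorem eq_zero_of_forall_grayForm_mul_eq_zero {R : Type*} [CommSemiring R] {z : R[ε]}
    (hz : ∀ r, grayForm R (r * z) = 0) : z = 0 := by
  have hfst : z.fst = 0 := by
    simpa [grayForm_apply] using hz ε
  have hsnd : z.snd = 0 := by
    simpa [grayForm_apply, hfst] using hz 1
  exact TrivSqZeroExt.ext hfst hsnd

theorem mem_dualCode_iff_forall_map_eq_zero {R M F ι : Type*} [CommRing R] [Zero M]
    [FunLike F R M] [ZeroHomClass F R M] [Fintype ι] (f : F)
    (hf : ∀ z, (∀ r, f (r * z) = 0) → z = 0) (C : Submodule R (ι → R)) (x : ι → R) :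
    x ∈ dualCode (C : Set (ι → R)) ↔ ∀ y ∈ C, f (∑ i, x i * y i) = 0 := by
  refine ⟨fun hx y hy => by rw [hx y hy, map_zero], fun hx y hy => hf _ fun r => ?_⟩
  -- Membership of `r • y` in `C` makes `f` vanish on the whole ideal generated by `⟨x, y⟩`.
  have hr : ∑ i, x i * (r • y) i = r * ∑ i, x i * y i := dotProduct_smul r x y
  rw [← hr]
  exact hx _ (C.smul_mem r hy)

/-- The Gray map as an isomorphism of binary vector spaces, with inverse
`(v, w) ↦ (w - v) + v u`; through it the Gray image of a linear code becomes a subspace. -/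
def grayEquiv (n : ℕ) : (Fin n → F2u) ≃ₗ[ZMod 2] (Fin n ⊕ Fin n → ZMod 2) where
  toFun := grayMap n
  map_add' x y := by
    ext (i | i)
    · rfl
    · exact add_add_add_comm _ _ _ _
  map_smul' c x := by
    ext (i | i)
    · rfl
    · exact (mul_add _ _ _).symm
  invFun w i := (w (Sum.inr i) - w (Sum.inl i), w (Sum.inl i))
  left_inv x := funext fun i => TrivSqZeroExt.ext (add_sub_cancel_right _ _) rfl
  right_inv w := by
    ext (i | i)
    · rfl
    · exact sub_add_cancel _ _

theorem sum_grayMap_mul_grayMap (n : ℕ) (x y : Fin n → F2u) :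
    ∑ i, grayMap n x i * grayMap n y i = grayForm (ZMod 2) (∑ i, x i * y i) := by
  simp only [map_sum, grayForm_mul, Fintype.sum_sum_type, Finset.sum_add_distrib, grayMap,
    Sum.elim_inl, Sum.elim_inr]

theorem image_grayMap_dualCode (n : ℕ) (C : Submodule F2u (Fin n → F2u)) :
    grayMap n '' dualCode (C : Set (Fin n → F2u)) =
      dualCode (grayMap n '' (C : Set (Fin n → F2u))) := by
  ext w
  obtain ⟨x, rfl⟩ : ∃ x, grayMap n x = w := (grayEquiv n).surjective w
  have hinj : Function.Injective (grayMap n) := (grayEquiv n).injective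
  calc
    grayMap n x ∈ grayMap n '' dualCode (C : Set (Fin n → F2u))
      ↔ x ∈ dualCode (C : Set (Fin n → F2u)) := hinj.mem_set_image
    _ ↔ ∀ y ∈ C, grayForm (ZMod 2) (∑ i, x i * y i) = 0 :=
      mem_dualCode_iff_forall_map_eq_zero _
        (fun _ => eq_zero_of_forall_grayForm_mul_eq_zero) C x
    _ ↔ ∀ y ∈ C, ∑ i, grayMap n x i * grayMap n y i = 0 := by
      simp only [sum_grayMap_mul_grayMap]
    _ ↔ grayMap n x ∈ dualCode (grayMap n '' (C : Set (Fin n → F2u))) := by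
      simp only [dualCode, Set.mem_ofPred_eq, Set.forall_mem_image, SetLike.mem_coe]

theorem gray_image_of_selfDual_is_selfDual_general (n : ℕ)
    (C : Submodule F2u (Fin n → F2u)) :
    (∃ D : Submodule (ZMod 2) ((Fin n ⊕ Fin n) → ZMod 2),
      (D : Set ((Fin n ⊕ Fin n) → ZMod 2)) = grayMap n '' (C : Set (Fin n → F2u))) ∧
    grayMap n '' dualCode (C : Set (Fin n → F2u)) =
      dualCode (grayMap n '' (C : Set (Fin n → F2u))) :=
  ⟨⟨(C.restrictScalars (ZMod 2)).map (grayEquiv n).toLinearMap, rfl⟩,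
    image_grayMap_dualCode n C⟩

/-- If `C` is a self-dual code of length `n` over `F₂+uF₂`, then its Gray image `φ(C)` is an
`F₂`-subspace of `F₂^{2n}` which is a self-dual binary code of length `2n`. -/
theorem gray_image_of_selfDual_is_selfDual (n : ℕ) (C : Submodule F2u (Fin n → F2u))
    (hC : (C : Set (Fin n → F2u)) = dualCode (C : Set (Fin n → F2u))) :
    (∃ D : Submodule (ZMod 2) ((Fin n ⊕ Fin n) → ZMod 2),
      (D : Set ((Fin n ⊕ Fin n) → ZMod 2)) = grayMap n '' (C : Set (Fin n → F2u))) ∧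
    grayMap n '' (C : Set (Fin n → F2u)) =
      dualCode (grayMap n '' (C : Set (Fin n → F2u))) := by
  simpa only [← hC] using gray_image_of_selfDual_is_selfDual_general n C
end

section
/- Suppose C is a self-dual code of length 2n over F₂+uF₂ generated by the rows of a matrix [Iₙ | A], where Iₙ is the n×n identity matrix and A is an n×n matrix over F₂+uF₂ (i.e., C is the F₂+uF₂-span of these n rows). Then the projection μ(C) ⊆ F₂^{2n} is a self-dual binary code of length 2n. -/
/-- The componentwise projection `μ : (F₂+uF₂)ⁿ → F₂ⁿ`, `a + bu ↦ a` in each coordinate. -/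
def muVec {ι : Type*} (x : ι → F2u) : ι → ZMod 2 := fun i => (x i).fst

/-!
The code generated by `[I | A]` is `{(v, vA)}` and its dual is `{(-Aw, w)}`, so self-orthogonality
of the code means `A * Aᵀ = -1`. For square `A` one-sided inverses are two-sided, hence
`Aᵀ * A = -1`, which says that the dual is contained in the code. The matrix identity is preserved
by every ring homomorphism, and applying a surjective one to all codewords turns the code of
`[I | A]` into that of `[I | f(A)]`. The map `μ` is the case `a + bu ↦ a`.
-/

section SystematicCode

open Matrix

section Semiring

variable {R S ι κ : Type*} [Semiring R] [Semiring S] [DecidableEq ι]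

/-- The linear code with generator matrix `[I | A]` in systematic form: the information symbols are
the coordinates in `ι`, the check symbols those in `κ`. -/
def systematicCode (A : Matrix ι κ R) : Submodule R (ι ⊕ κ → R) :=
  Submodule.span R (Set.range (fromCols 1 A).row)

theorem mem_systematicCode [Fintype ι] {A : Matrix ι κ R} {x : ι ⊕ κ → R} :
    x ∈ systematicCode A ↔ (x ∘ Sum.inl) ᵥ* A = x ∘ Sum.inr := by
  rw [systematicCode, ← range_vecMulLinear, LinearMap.mem_range]
  simp only [vecMulLinear_apply, vecMul_fromCols, vecMul_one]
  constructor
  · rintro ⟨v, rfl⟩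
    rfl
  · intro h
    exact ⟨x ∘ Sum.inl, by rw [h, Sum.elim_comp_inl_inr]⟩

theorem image_systematicCode [Finite ι] {f : R →+* S} (hf : Function.Surjective f)
    (A : Matrix ι κ R) :
    (fun x : ι ⊕ κ → R => f ∘ x) '' systematicCode A = systematicCode (A.map f) := by
  cases nonempty_fintype ι
  ext y
  simp only [Set.mem_image, SetLike.mem_coe, mem_systematicCode]
  constructor
  · rintro ⟨x, hx, rfl⟩
    ext j
    exact (RingHom.map_vecMul f A _ j).symm.trans (congrArg f (congrFun hx j))
  · intro hy
    obtain ⟨v, hv : f ∘ v = y ∘ Sum.inl⟩ := hf.comp_left (y ∘ Sum.inl)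
    refine ⟨Sum.elim v (v ᵥ* A), rfl, ?_⟩
    ext (i | j)
    · exact congrFun hv i
    · calc f ((v ᵥ* A) j) = ((f ∘ v) ᵥ* A.map f) j := RingHom.map_vecMul f A v j
        _ = y (Sum.inr j) := by rw [hv, hy, Function.comp_apply]

end Semiring

variable {R S ι κ : Type*} [CommRing R] [CommRing S]
variable [Fintype ι] [DecidableEq ι] [Fintype κ]

theorem mem_dualCode_systematicCode {A : Matrix ι κ R} {x : ι ⊕ κ → R} :
    x ∈ dualCode (systematicCode A : Set (ι ⊕ κ → R)) ↔
      x ∘ Sum.inl + A *ᵥ (x ∘ Sum.inr) = 0 := by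
  have pairing (v : ι → R) :
      x ⬝ᵥ Sum.elim v (v ᵥ* A) = (x ∘ Sum.inl + A *ᵥ (x ∘ Sum.inr)) ⬝ᵥ v := by
    rw [← Sum.elim_comp_inl_inr x, sumElim_dotProduct_sumElim, add_dotProduct,
      dotProduct_comm _ (v ᵥ* A), ← dotProduct_mulVec, dotProduct_comm v]
    simp only [Sum.elim_comp_inl, Sum.elim_comp_inr]
  constructor
  · intro hx
    refine dotProduct_eq_zero _ fun v => ?_
    rw [← pairing]
    exact hx _ (mem_systematicCode.2 rfl)
  · intro hx y hy
    change x ⬝ᵥ y = 0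
    rw [← Sum.elim_comp_inl_inr y, ← mem_systematicCode.1 hy, pairing, hx, zero_dotProduct]

theorem systematicCode_subset_dualCode_iff {A : Matrix ι κ R} :
    (systematicCode A : Set (ι ⊕ κ → R)) ⊆ dualCode (systematicCode A : Set (ι ⊕ κ → R)) ↔
      A * Aᵀ = -1 := by
  have dual_codeword (v : ι → R) : v + A *ᵥ (v ᵥ* A) = 0 ↔
      (A * Aᵀ) *ᵥ v = (-1 : Matrix ι ι R) *ᵥ v := by
    rw [← mulVec_mulVec, mulVec_transpose, neg_mulVec, one_mulVec, add_comm, add_eq_zero_iff_eq_neg]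
  rw [ext_iff_mulVec]
  constructor
  · intro h v
    exact (dual_codeword v).1 <|
      mem_dualCode_systematicCode.1 (h (a := Sum.elim v (v ᵥ* A)) (mem_systematicCode.2 rfl))
  · intro h x hx
    rw [mem_dualCode_systematicCode, ← mem_systematicCode.1 hx]
    exact (dual_codeword _).2 (h _)

theorem dualCode_systematicCode_subset [DecidableEq κ] {A : Matrix ι κ R} (hA : Aᵀ * A = -1) :
    dualCode (systematicCode A : Set (ι ⊕ κ → R)) ⊆ systematicCode A := by
  intro x hx
  have hinl : x ∘ Sum.inl = -(A *ᵥ (x ∘ Sum.inr)) :=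
    eq_neg_of_add_eq_zero_left (mem_dualCode_systematicCode.1 hx)
  refine mem_systematicCode.2 ?_
  rw [hinl, ← mulVec_transpose, mulVec_neg, mulVec_mulVec, hA, neg_mulVec, one_mulVec, neg_neg]

theorem systematicCode_eq_dualCode {A : Matrix ι ι R} (hA : A * Aᵀ = -1) :
    (systematicCode A : Set (ι ⊕ ι → R)) = dualCode (systematicCode A : Set (ι ⊕ ι → R)) := by
  have hA_transpose : Aᵀ * A = -1 := by
    rw [← neg_eq_iff_eq_neg, ← neg_mul, mul_eq_one_comm, mul_neg, hA, neg_neg]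
  exact (systematicCode_subset_dualCode_iff.2 hA).antisymm
    (dualCode_systematicCode_subset hA_transpose)

theorem mu_image_selfDual_of_identity_block_generator_general {f : R →+* S}
    (hf : Function.Surjective f) (A : Matrix ι ι R)
    (hC : (systematicCode A : Set (ι ⊕ ι → R)) ⊆ dualCode (systematicCode A : Set (ι ⊕ ι → R))) :
    (∃ D : Submodule S (ι ⊕ ι → S),
      (D : Set (ι ⊕ ι → S)) = (fun x : ι ⊕ ι → R => f ∘ x) '' systematicCode A) ∧
    (fun x : ι ⊕ ι → R => f ∘ x) '' systematicCode A =
      dualCode ((fun x : ι ⊕ ι → R => f ∘ x) '' systematicCode A) := by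
  have hA : A.map f * (A.map f)ᵀ = -1 := by
    rw [← transpose_map, ← Matrix.map_mul, systematicCode_subset_dualCode_iff.1 hC,
      Matrix.map_neg f (map_neg f), Matrix.map_one f (map_zero f) (map_one f)]
  rw [image_systematicCode hf]
  exact ⟨⟨systematicCode (A.map f), rfl⟩, systematicCode_eq_dualCode hA⟩

end SystematicCode

/-- If `C` is a self-dual code of length `2n` over `F₂+uF₂` generated by the rows of a matrix
`[Iₙ | A]`, then the projection `μ(C)` is a self-dual binary code of length `2n`. -/
theorem mu_image_selfDual_of_identity_block_generator (n : ℕ)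
    (A : Matrix (Fin n) (Fin n) F2u)
    (C : Submodule F2u ((Fin n ⊕ Fin n) → F2u))
    (hgen : C = Submodule.span F2u (Set.range fun i : Fin n =>
      (Sum.elim (fun j => if i = j then (1 : F2u) else 0) (fun j => A i j) :
        (Fin n ⊕ Fin n) → F2u)))
    (hsd : (C : Set ((Fin n ⊕ Fin n) → F2u)) = dualCode (C : Set ((Fin n ⊕ Fin n) → F2u))) :
    (∃ D : Submodule (ZMod 2) ((Fin n ⊕ Fin n) → ZMod 2),
      (D : Set ((Fin n ⊕ Fin n) → ZMod 2)) = muVec '' (C : Set ((Fin n ⊕ Fin n) → F2u))) ∧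
    muVec '' (C : Set ((Fin n ⊕ Fin n) → F2u)) =
      dualCode (muVec '' (C : Set ((Fin n ⊕ Fin n) → F2u))) := by
  subst hgen
  exact mu_image_selfDual_of_identity_block_generator_general
    (f := (TrivSqZeroExt.fstHom (ZMod 2) (ZMod 2) (ZMod 2)).toRingHom)
    TrivSqZeroExt.fst_surjective A hsd.subset
end

section
/- Let C be a linear code over F₂+uF₂ of length n and let C' = μ(C) be its projection to F₂. If C' contains a nonzero codeword, then the minimum Lee weight d of the nonzero codewords of C and the minimum Hamming weight d' of the nonzero codewords of C' satisfy d ≤ 2d'. (Equivalently: for every nonzero c' ∈ μ(C) there is a nonzero c ∈ C whose Lee weight is at most twice the Hamming weight of c'.) -/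
/-- The Lee weight on `F₂+uF₂`: `0, 1, u, 1+u` have Lee weights `0, 1, 2, 1` respectively. -/
noncomputable def leeWeight (x : F2u) : ℕ :=
  letI := Classical.decEq F2u
  if x = 0 then 0 else if x = 1 then 1 else if x = DualNumber.eps then 2 else 1

/-- The Lee weight of a vector over `F₂+uF₂` is the sum of the Lee weights of its coordinates. -/
noncomputable def leeWt {n : ℕ} (x : Fin n → F2u) : ℕ := ∑ i, leeWeight (x i)

/-! Multiplication by `u` sends `a + bu` to `au`. It therefore turns a codeword into one whose Lee
weight is exactly twice the Hamming weight of its projection, and which vanishes only if the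
projection does. -/

open DualNumber TrivSqZeroExt

theorem dualNumber_eps_mul_eq_inr_fst {R : Type*} [Semiring R] (x : R[ε]) :
    ε * x = inr x.fst := by
  ext <;> simp

theorem leeWeight_inr (a : ZMod 2) : leeWeight (inr a) = if a ≠ 0 then 2 else 0 := by
  have inr_one_ne_zero : (inr 1 : F2u) ≠ 0 := fun h => one_ne_zero (congrArg snd h)
  have inr_one_ne_one : (inr 1 : F2u) ≠ 1 := fun h => zero_ne_one (congrArg fst h)
  fin_cases a
  · exact if_pos (inr_zero _)
  · change leeWeight (inr 1) = 2
    rw [leeWeight, if_neg inr_one_ne_zero, if_neg inr_one_ne_one]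
    exact if_pos rfl

theorem leeWeight_eps_mul (x : F2u) : leeWeight (ε * x) = if x.fst ≠ 0 then 2 else 0 := by
  rw [dualNumber_eps_mul_eq_inr_fst, leeWeight_inr]

theorem leeWt_eps_smul {n : ℕ} (x : Fin n → F2u) :
    leeWt ((ε : F2u) • x) = 2 * hammingNorm (muVec x) := by
  calc leeWt ((ε : F2u) • x)
      = ∑ i, if muVec x i ≠ 0 then 2 else 0 :=
        Finset.sum_congr rfl fun i _ => leeWeight_eps_mul (x i)
    _ = 2 * hammingNorm (muVec x) := by
        rw [← Finset.sum_filter, Finset.sum_const, smul_eq_mul, mul_comm, hammingNorm]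

theorem eps_smul_eq_zero_iff_muVec_eq_zero {ι : Type*} (x : ι → F2u) :
    (ε : F2u) • x = 0 ↔ muVec x = 0 := by
  have eps_mul_eq_zero_iff (i : ι) : ε * x i = 0 ↔ (x i).fst = 0 := by
    rw [dualNumber_eps_mul_eq_inr_fst]
    exact inr_injective.eq_iff' (inr_zero _)
  exact funext_iff.trans ((forall_congr' eps_mul_eq_zero_iff).trans funext_iff.symm)

theorem min_lee_weight_le_two_mul_min_hamming_weight_of_projection_general
    (n : ℕ) (C : Set (Fin n → F2u)) (hC : ∀ c ∈ C, (ε : F2u) • c ∈ C)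
    (hne : ∃ c' ∈ muVec '' C, c' ≠ 0) :
    sInf {w : ℕ | ∃ c ∈ C, c ≠ 0 ∧ leeWt c = w} ≤
      2 * sInf {w : ℕ | ∃ c' ∈ muVec '' C, c' ≠ 0 ∧ hammingNorm c' = w} ∧
    ∀ c' ∈ muVec '' C, c' ≠ 0 → ∃ c ∈ C, c ≠ 0 ∧ leeWt c ≤ 2 * hammingNorm c' := by
  have exists_leeWt_eq : ∀ c' ∈ muVec '' C, c' ≠ 0 →
      ∃ c ∈ C, c ≠ 0 ∧ leeWt c = 2 * hammingNorm c' := by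
    rintro _ ⟨c, hc, rfl⟩ hc_ne
    exact ⟨(ε : F2u) • c, hC c hc, (eps_smul_eq_zero_iff_muVec_eq_zero c).not.mpr hc_ne,
      leeWt_eps_smul c⟩
  constructor
  · obtain ⟨c₀, hc₀, hc₀_ne⟩ := hne
    obtain ⟨c', hc', hc'_ne, hmin⟩ :=
      Nat.sInf_mem (s := {w : ℕ | ∃ c' ∈ muVec '' C, c' ≠ 0 ∧ hammingNorm c' = w})
        ⟨_, c₀, hc₀, hc₀_ne, rfl⟩
    rw [← hmin]
    exact Nat.sInf_le (exists_leeWt_eq c' hc' hc'_ne)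
  · intro c' hc' hc'_ne
    obtain ⟨c, hc, hc_ne, hweight⟩ := exists_leeWt_eq c' hc' hc'_ne
    exact ⟨c, hc, hc_ne, hweight.le⟩

/-- Let `C` be a linear code over `F₂+uF₂` of length `n` and `C' = μ(C)` its binary projection.
If `C'` contains a nonzero codeword, then the minimum Lee weight `d` of the nonzero codewords of
`C` and the minimum Hamming weight `d'` of the nonzero codewords of `C'` satisfy `d ≤ 2d'`;
equivalently, for every nonzero `c' ∈ μ(C)` there is a nonzero `c ∈ C` whose Lee weight is at
most twice the Hamming weight of `c'`. -/
theorem min_lee_weight_le_two_mul_min_hamming_weight_of_projection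
    (n : ℕ) (C : Submodule F2u (Fin n → F2u))
    (hne : ∃ c' ∈ muVec '' (C : Set (Fin n → F2u)), c' ≠ (0 : Fin n → ZMod 2)) :
    sInf {w : ℕ | ∃ c ∈ C, c ≠ (0 : Fin n → F2u) ∧ leeWt c = w} ≤
      2 * sInf {w : ℕ | ∃ c' ∈ muVec '' (C : Set (Fin n → F2u)),
        c' ≠ (0 : Fin n → ZMod 2) ∧ hammingNorm c' = w} ∧
    ∀ c' ∈ muVec '' (C : Set (Fin n → F2u)), c' ≠ (0 : Fin n → ZMod 2) →
      ∃ c ∈ C, c ≠ (0 : Fin n → F2u) ∧ leeWt c ≤ 2 * hammingNorm c' :=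
  min_lee_weight_le_two_mul_min_hamming_weight_of_projection_general n C
    (fun _ => C.smul_mem ε) hne
end

section
/- Let C ⊆ F₂ⁿ (F₂ = ZMod 2) be a self-dual binary code spanned by vectors r₁, …, r_k, and let X ∈ F₂ⁿ satisfy ⟨X,X⟩ = 1. Set yᵢ = ⟨rᵢ, X⟩ for each i. Then the code D ⊆ F₂^{n+2} spanned by the vector (1, 0, X) together with the vectors (yᵢ, yᵢ, rᵢ), 1 ≤ i ≤ k, is a self-dual code of length n+2. -/
/-! Write `e = (1, 0, X)`. The map `φ w = (-⟨w, X⟩, c⟨w, X⟩, w)` is an isometric embedding because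
`c² = -1`, and `e` is isotropic because `⟨X, X⟩ = -1`. Moreover `e⊥ = R e + φ(Rⁿ)`. Hence
`(R e + φ(C))⊥ = R e + φ(C⊥)` for every code `C`, and self-duality passes from `C` to
`R e + φ(C)`, the code generated by `(1, 0, X)` and the vectors `(-yᵢ, c yᵢ, rᵢ)`. -/

section Extension

open Submodule

variable {R ι : Type*} [CommRing R]

/-- The vector `(1, 0, X)` adjoined in the extension of a code. As in the statement of the
theorem, `R^{n+2}` is encoded as `Fin 2 ⊕ ι → R`, the two new coordinates coming first. -/
def extensionVector (X : ι → R) : Fin 2 ⊕ ι → R :=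
  Sum.elim ![1, 0] X

variable [Fintype ι]

/-- The lift `w ↦ (-⟨w, X⟩, c⟨w, X⟩, w)` of words of length `n` to words of length `n + 2`. -/
def extensionMap (c : R) (X : ι → R) : (ι → R) →ₗ[R] (Fin 2 ⊕ ι → R) where
  toFun w := Sum.elim ![-(w ⬝ᵥ X), c * (w ⬝ᵥ X)] w
  map_add' u v := by
    ext (j | j)
    · fin_cases j <;> simp [add_dotProduct, mul_add, add_comm]
    · simp
  map_smul' a u := by
    ext (j | j)
    · fin_cases j <;> simp [smul_dotProduct, mul_left_comm]
    · simp

/-- The extension of `C` by `X`: the code generated by `(1, 0, X)` and the lifts of the words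
of `C`. -/
def extendedCode (c : R) (X : ι → R) (C : Submodule R (ι → R)) :
    Submodule R (Fin 2 ⊕ ι → R) :=
  R ∙ extensionVector X ⊔ C.map (extensionMap c X)

theorem extendedCode_span (c : R) (X : ι → R) (s : Set (ι → R)) :
    extendedCode c X (span R s) = span R ({extensionVector X} ∪ extensionMap c X '' s) := by
  rw [extendedCode, span_union, span_image]

theorem mem_extendedCode {c : R} {X : ι → R} {C : Submodule R (ι → R)} {v : Fin 2 ⊕ ι → R} :
    v ∈ extendedCode c X C ↔ ∃ t : R, ∃ w ∈ C, t • extensionVector X + extensionMap c X w = v := by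
  simp [extendedCode, mem_sup, mem_span_singleton]

theorem extensionVector_mem_extendedCode (c : R) (X : ι → R) (C : Submodule R (ι → R)) :
    extensionVector X ∈ extendedCode c X C :=
  mem_sup_left (mem_span_singleton_self _)

theorem extensionVector_dotProduct_self {X : ι → R} (hX : X ⬝ᵥ X = -1) :
    extensionVector X ⬝ᵥ extensionVector X = 0 := by
  simp [extensionVector, hX]

theorem extensionMap_dotProduct_extensionVector (c : R) (X w : ι → R) :
    extensionMap c X w ⬝ᵥ extensionVector X = 0 := by
  simp [extensionMap, extensionVector]

theorem extensionMap_dotProduct_extensionMap {c : R} (hc : c ^ 2 = -1) (X u v : ι → R) :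
    extensionMap c X u ⬝ᵥ extensionMap c X v = u ⬝ᵥ v := by
  simp only [extensionMap, LinearMap.coe_mk, AddHom.coe_mk, sumElim_dotProduct_sumElim,
    Matrix.vec2_dotProduct']
  linear_combination (u ⬝ᵥ X) * (v ⬝ᵥ X) * hc

theorem smul_extensionVector_add_extensionMap_dotProduct {c : R} (hc : c ^ 2 = -1) {X : ι → R}
    (hX : X ⬝ᵥ X = -1) (s t : R) (u v : ι → R) :
    (s • extensionVector X + extensionMap c X u) ⬝ᵥ
      (t • extensionVector X + extensionMap c X v) = u ⬝ᵥ v := by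
  simp only [add_dotProduct, dotProduct_add, smul_dotProduct, dotProduct_smul,
    extensionVector_dotProduct_self hX, extensionMap_dotProduct_extensionVector,
    dotProduct_comm (extensionVector X) (extensionMap c X v),
    extensionMap_dotProduct_extensionMap hc, smul_zero, zero_add]

theorem exists_eq_smul_extensionVector_add_extensionMap {c : R} (hc : c ^ 2 = -1) {X : ι → R}
    (hX : X ⬝ᵥ X = -1) {v : Fin 2 ⊕ ι → R} (hv : v ⬝ᵥ extensionVector X = 0) :
    ∃ (t : R) (w : ι → R), t • extensionVector X + extensionMap c X w = v := by
  obtain ⟨a, b, z, rfl⟩ : ∃ a b z, v = Sum.elim ![a, b] z :=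
    ⟨v (.inl 0), v (.inl 1), v ∘ .inr, by ext (j | j); fin_cases j <;> rfl; rfl⟩
  have hzX : a + z ⬝ᵥ X = 0 := by simpa [extensionVector] using hv
  -- The second coordinate of `t e + φ (z - t X)` is `c (t - a)`, which must equal `b`.
  let t := a - c * b
  have hwX : (z - t • X) ⬝ᵥ X = -(c * b) := by
    rw [sub_dotProduct, smul_dotProduct, hX, smul_eq_mul]
    linear_combination hzX
  refine ⟨t, z - t • X, ?_⟩
  ext (j | j)
  · fin_cases j
    · simp [extensionVector, extensionMap, hwX, t]
    · have hb : c * -(c * b) = b := by linear_combination -b * hc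
      simpa [extensionVector, extensionMap, hwX] using hb
  · simp [extensionVector, extensionMap]

theorem mem_dualCode_extendedCode {c : R} (hc : c ^ 2 = -1) {X : ι → R} (hX : X ⬝ᵥ X = -1)
    {C : Submodule R (ι → R)} {v : Fin 2 ⊕ ι → R} :
    v ∈ dualCode (extendedCode c X C : Set (Fin 2 ⊕ ι → R)) ↔
      ∃ t : R, ∃ w ∈ dualCode (C : Set (ι → R)),
        t • extensionVector X + extensionMap c X w = v := by
  constructor
  · intro hv
    obtain ⟨t, w, rfl⟩ := exists_eq_smul_extensionVector_add_extensionMap hc hX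
      (hv _ (extensionVector_mem_extendedCode c X C))
    refine ⟨t, w, fun u hu ↦ ?_, rfl⟩
    calc
      w ⬝ᵥ u = (t • extensionVector X + extensionMap c X w) ⬝ᵥ
          ((0 : R) • extensionVector X + extensionMap c X u) :=
        (smul_extensionVector_add_extensionMap_dotProduct hc hX t 0 w u).symm
      _ = 0 := hv _ (mem_extendedCode.mpr ⟨0, u, hu, rfl⟩)
  · rintro ⟨t, w, hw, rfl⟩ v hv
    obtain ⟨s, u, hu, rfl⟩ := mem_extendedCode.mp hv
    exact (smul_extensionVector_add_extensionMap_dotProduct hc hX t s w u).trans (hw u hu)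

theorem coe_extendedCode_eq_dualCode {c : R} (hc : c ^ 2 = -1) {X : ι → R} (hX : X ⬝ᵥ X = -1)
    {C : Submodule R (ι → R)} (hC : (C : Set (ι → R)) = dualCode (C : Set (ι → R))) :
    (extendedCode c X C : Set (Fin 2 ⊕ ι → R)) =
      dualCode (extendedCode c X C : Set (Fin 2 ⊕ ι → R)) := by
  ext v
  rw [mem_dualCode_extendedCode hc hX, ← hC]
  exact mem_extendedCode

theorem extension_selfDual_F2_general {κ : Type*} {c : R} (hc : c ^ 2 = -1) {X : ι → R}
    (hX : X ⬝ᵥ X = -1) (r : κ → ι → R)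
    (hr : (span R (Set.range r) : Set (ι → R)) = dualCode (span R (Set.range r) : Set (ι → R))) :
    let D := span R ({(Sum.elim ![1, 0] X : Fin 2 ⊕ ι → R)} ∪
      Set.range fun i ↦ (Sum.elim ![-(r i ⬝ᵥ X), c * (r i ⬝ᵥ X)] (r i) : Fin 2 ⊕ ι → R))
    (D : Set (Fin 2 ⊕ ι → R)) = dualCode (D : Set (Fin 2 ⊕ ι → R)) := by
  have hD := coe_extendedCode_eq_dualCode hc hX hr
  rwa [extendedCode_span, ← Set.range_comp] at hD

end Extension

/-- Extension theorem over `F₂`: if `C ⊆ F₂ⁿ` is a self-dual binary code spanned by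
`r₁, …, r_k` and `X ∈ F₂ⁿ` satisfies `⟨X,X⟩ = 1`, then with `yᵢ = ⟨rᵢ, X⟩`, the code
`D ⊆ F₂^{n+2}` spanned by `(1, 0, X)` together with the `(yᵢ, yᵢ, rᵢ)` is a self-dual code of
length `n + 2`. -/
theorem extension_selfDual_F2 (n k : ℕ) (r : Fin k → (Fin n → ZMod 2))
    (C : Submodule (ZMod 2) (Fin n → ZMod 2))
    (hgen : C = Submodule.span (ZMod 2) (Set.range r))
    (hsd : (C : Set (Fin n → ZMod 2)) = dualCode (C : Set (Fin n → ZMod 2)))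
    (X : Fin n → ZMod 2) (hX : ∑ i, X i * X i = 1)
    (y : Fin k → ZMod 2) (hy : ∀ i, y i = ∑ j, r i j * X j)
    (D : Submodule (ZMod 2) ((Fin 2 ⊕ Fin n) → ZMod 2))
    (hD : D = Submodule.span (ZMod 2)
      ({(Sum.elim ![1, 0] X : (Fin 2 ⊕ Fin n) → ZMod 2)} ∪
        Set.range fun i : Fin k =>
          (Sum.elim ![y i, y i] (r i) : (Fin 2 ⊕ Fin n) → ZMod 2))) :
    (D : Set ((Fin 2 ⊕ Fin n) → ZMod 2)) = dualCode (D : Set ((Fin 2 ⊕ Fin n) → ZMod 2)) := by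
  obtain rfl : y = fun i ↦ r i ⬝ᵥ X := funext hy
  subst hgen hD
  simpa [CharTwo.neg_eq] using
    extension_selfDual_F2_general (c := 1) (by decide) (X := X) (hX.trans (by decide)) r hsd
end

section
/- Let R = F₂+uF₂, let C ⊆ Rⁿ be a self-dual code spanned over R by vectors r₁, …, r_k, let c be a unit of R with c² = −1 (equivalently c² = 1, since char R = 2), and let X ∈ Rⁿ satisfy ⟨X,X⟩ = −1 (equivalently ⟨X,X⟩ = 1). Set yᵢ = ⟨rᵢ, X⟩ for each i. Then the code D ⊆ R^{n+2} spanned over R by the vector (1, 0, X) together with the vectors (yᵢ, c·yᵢ, rᵢ), 1 ≤ i ≤ k, is a self-dual code of length n+2 over R. -/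
/-!
Put `e = (1, 0, X)` and `φ z = (-⟨z, X⟩, c⟨z, X⟩, z)`. Since `⟨X, X⟩ = -1` and `c² = -1`, the
vector `e` is isotropic, and `φ` preserves the Euclidean inner product and takes values in `e^⊥`.
Moreover `e^⊥ = R e + φ(Rⁿ)`, so the dual of `R e + φ(C)` is `R e + φ(C^⊥)`, for every submodule `C`
over every commutative ring. In characteristic two the sign in `φ` disappears.
-/

section BorderedCode

open Submodule

variable {R ι : Type*} [CommRing R]

/-- The vector `(1, 0, X)`, the generator of the extended code that does not come from the
original code. -/
def borderVector (X : ι → R) : Fin 2 ⊕ ι → R :=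
  Sum.elim ![1, 0] X

variable [Fintype ι]

/-- The map `z ↦ (-⟨z, X⟩, c⟨z, X⟩, z)`, which embeds the original code into the extended code.
The sign makes its values orthogonal to `borderVector X` in every characteristic. -/
def borderMap (c : R) (X : ι → R) : (ι → R) →ₗ[R] (Fin 2 ⊕ ι → R) where
  toFun z := Sum.elim ![-(z ⬝ᵥ X), c * (z ⬝ᵥ X)] z
  map_add' z w := by
    ext (i | i)
    · fin_cases i <;> simp [add_dotProduct, mul_add, add_comm]
    · simp
  map_smul' s z := by
    ext (i | i)
    · fin_cases i <;> simp [smul_dotProduct, mul_left_comm]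
    · simp

/-- The extension by two coordinates of the code `C`: the submodule spanned by `borderVector X`
and the image of `C` under `borderMap c X`. -/
def borderedCode (c : R) (X : ι → R) (C : Submodule R (ι → R)) :
    Submodule R (Fin 2 ⊕ ι → R) :=
  span R {borderVector X} ⊔ C.map (borderMap c X)

variable {c : R} {X : ι → R}

theorem borderMap_apply (z : ι → R) :
    borderMap c X z = Sum.elim ![-(z ⬝ᵥ X), c * (z ⬝ᵥ X)] z :=
  rfl

theorem mem_borderedCode {C : Submodule R (ι → R)} {v : Fin 2 ⊕ ι → R} :
    v ∈ borderedCode c X C ↔ ∃ s : R, ∃ z ∈ C, s • borderVector X + borderMap c X z = v := by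
  simp only [borderedCode, mem_sup, mem_span_singleton, mem_map, exists_exists_eq_and,
    exists_exists_and_eq_and]

theorem borderedCode_span_range {κ : Type*} (c : R) (X : ι → R) (r : κ → ι → R) :
    borderedCode c X (span R (Set.range r)) =
      span R ({borderVector X} ∪ Set.range fun i => borderMap c X (r i)) := by
  rw [borderedCode, map_span, ← span_union, ← Set.range_comp, Function.comp_def]

theorem borderVector_dotProduct_self (hX : X ⬝ᵥ X = -1) :
    borderVector X ⬝ᵥ borderVector X = 0 := by
  simp [borderVector, sumElim_dotProduct_sumElim, hX]

theorem borderMap_dotProduct_borderVector (z : ι → R) :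
    borderMap c X z ⬝ᵥ borderVector X = 0 := by
  simp [borderVector, borderMap_apply, sumElim_dotProduct_sumElim]

theorem borderMap_dotProduct_borderMap (hc : c ^ 2 = -1) (z w : ι → R) :
    borderMap c X z ⬝ᵥ borderMap c X w = z ⬝ᵥ w := by
  simp only [borderMap_apply, sumElim_dotProduct_sumElim, Matrix.vec2_dotProduct']
  linear_combination (z ⬝ᵥ X) * (w ⬝ᵥ X) * hc

theorem smul_borderVector_add_borderMap_dotProduct_borderVector (hX : X ⬝ᵥ X = -1)
    (s : R) (z : ι → R) :
    (s • borderVector X + borderMap c X z) ⬝ᵥ borderVector X = 0 := by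
  rw [add_dotProduct, smul_dotProduct, borderVector_dotProduct_self hX,
    borderMap_dotProduct_borderVector, smul_zero, add_zero]

theorem smul_borderVector_add_borderMap_dotProduct_borderMap (hc : c ^ 2 = -1)
    (s : R) (z w : ι → R) :
    (s • borderVector X + borderMap c X z) ⬝ᵥ borderMap c X w = z ⬝ᵥ w := by
  rw [add_dotProduct, smul_dotProduct, dotProduct_comm (borderVector X),
    borderMap_dotProduct_borderVector, borderMap_dotProduct_borderMap hc, smul_zero, zero_add]

theorem dotProduct_borderVector_eq_zero_iff (hc : c ^ 2 = -1) (hX : X ⬝ᵥ X = -1)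
    {v : Fin 2 ⊕ ι → R} :
    v ⬝ᵥ borderVector X = 0 ↔
      ∃ (s : R) (z : ι → R), s • borderVector X + borderMap c X z = v := by
  constructor
  · intro hv
    obtain ⟨p, w, rfl⟩ : ∃ p w, v = Sum.elim p w := ⟨_, _, (Sum.elim_comp_inl_inr v).symm⟩
    have hpw : p 0 + w ⬝ᵥ X = 0 := by
      simpa [borderVector, sumElim_dotProduct_sumElim, Matrix.vecHead] using hv
    -- The last block of `s • borderVector X + borderMap c X z` forces `z = w - s • X`, and the
    -- coordinate `c * (z ⬝ᵥ X) = p 1` then forces the value of `s`.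
    let s := p 0 - p 1 * c
    have hz : (w - s • X) ⬝ᵥ X = -(p 1 * c) := by
      rw [sub_dotProduct, smul_dotProduct, hX, smul_eq_mul]
      linear_combination hpw
    refine ⟨s, w - s • X, ?_⟩
    rw [borderMap_apply, hz]
    ext (i | i)
    · fin_cases i
      · simp [borderVector, s]
      · simp only [borderVector, Fin.mk_one, Pi.add_apply, Pi.smul_apply, Sum.elim_inl,
          Matrix.cons_val_one, Matrix.cons_val_fin_one, smul_zero, zero_add]
        linear_combination -p 1 * hc
    · simp [borderVector]
  · rintro ⟨s, z, rfl⟩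
    exact smul_borderVector_add_borderMap_dotProduct_borderVector hX s z

theorem mem_dualCode {C : Set (ι → R)} {x : ι → R} :
    x ∈ dualCode C ↔ ∀ y ∈ C, x ⬝ᵥ y = 0 :=
  Iff.rfl

theorem mem_dualCode_borderedCode_iff_dotProduct {C : Submodule R (ι → R)}
    {v : Fin 2 ⊕ ι → R} :
    v ∈ dualCode (borderedCode c X C : Set (Fin 2 ⊕ ι → R)) ↔
      v ⬝ᵥ borderVector X = 0 ∧ ∀ w ∈ C, v ⬝ᵥ borderMap c X w = 0 := by
  simp only [mem_dualCode, SetLike.mem_coe, mem_borderedCode]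
  constructor
  · intro hv
    exact ⟨hv _ ⟨1, 0, C.zero_mem, by simp⟩, fun w hw => hv _ ⟨0, w, hw, by simp⟩⟩
  · rintro ⟨hv, hvC⟩ _ ⟨s, w, hw, rfl⟩
    rw [dotProduct_add, dotProduct_smul, hv, hvC w hw, smul_zero, add_zero]

theorem mem_dualCode_borderedCode (hc : c ^ 2 = -1) (hX : X ⬝ᵥ X = -1)
    {C : Submodule R (ι → R)} {v : Fin 2 ⊕ ι → R} :
    v ∈ dualCode (borderedCode c X C : Set (Fin 2 ⊕ ι → R)) ↔
      ∃ s : R, ∃ z ∈ dualCode (C : Set (ι → R)), s • borderVector X + borderMap c X z = v := by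
  rw [mem_dualCode_borderedCode_iff_dotProduct, dotProduct_borderVector_eq_zero_iff hc hX]
  constructor
  · rintro ⟨⟨s, z, rfl⟩, hzC⟩
    simp only [smul_borderVector_add_borderMap_dotProduct_borderMap hc] at hzC
    exact ⟨s, z, hzC, rfl⟩
  · rintro ⟨s, z, hz, rfl⟩
    simp only [smul_borderVector_add_borderMap_dotProduct_borderMap hc]
    exact ⟨⟨s, z, rfl⟩, hz⟩

theorem borderedCode_eq_dualCode (hc : c ^ 2 = -1) (hX : X ⬝ᵥ X = -1)
    {C : Submodule R (ι → R)} (hC : (C : Set (ι → R)) = dualCode (C : Set (ι → R))) :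
    (borderedCode c X C : Set (Fin 2 ⊕ ι → R)) =
      dualCode (borderedCode c X C : Set (Fin 2 ⊕ ι → R)) := by
  ext v
  rw [mem_dualCode_borderedCode hc hX, ← hC]
  exact mem_borderedCode

theorem extension_selfDual_F2u_general {κ : Type*} (r : κ → ι → R)
    (hsd : (span R (Set.range r) : Set (ι → R)) = dualCode (span R (Set.range r) : Set (ι → R)))
    (hc : c ^ 2 = -1) (hX : X ⬝ᵥ X = -1) {D : Submodule R (Fin 2 ⊕ ι → R)}
    (hD : D = span R ({Sum.elim ![1, 0] X} ∪
      Set.range fun i => Sum.elim ![-(r i ⬝ᵥ X), c * (r i ⬝ᵥ X)] (r i))) :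
    (D : Set (Fin 2 ⊕ ι → R)) = dualCode (D : Set (Fin 2 ⊕ ι → R)) := by
  obtain rfl : D = borderedCode c X (span R (Set.range r)) :=
    hD.trans (borderedCode_span_range c X r).symm
  exact borderedCode_eq_dualCode hc hX hsd

end BorderedCode

instance F2u.charP_two : CharP F2u 2 :=
  charP_of_injective_algebraMap (R := ZMod 2) TrivSqZeroExt.inl_injective 2

/-- Extension theorem over `R = F₂+uF₂`: if `C ⊆ Rⁿ` is a self-dual code spanned over `R` by
`r₁, …, r_k`, `c` is a unit of `R` with `c² = -1`, and `X ∈ Rⁿ` satisfies `⟨X,X⟩ = -1`, then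
with `yᵢ = ⟨rᵢ, X⟩`, the code `D ⊆ R^{n+2}` spanned over `R` by `(1, 0, X)` together with the
`(yᵢ, c·yᵢ, rᵢ)` is a self-dual code of length `n + 2` over `R`. -/
theorem extension_selfDual_F2u (n k : ℕ) (r : Fin k → (Fin n → F2u))
    (C : Submodule F2u (Fin n → F2u))
    (hgen : C = Submodule.span F2u (Set.range r))
    (hsd : (C : Set (Fin n → F2u)) = dualCode (C : Set (Fin n → F2u)))
    (c : F2u) (hc : IsUnit c) (hc2 : c ^ 2 = -1)
    (X : Fin n → F2u) (hX : ∑ i, X i * X i = -1)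
    (y : Fin k → F2u) (hy : ∀ i, y i = ∑ j, r i j * X j)
    (D : Submodule F2u ((Fin 2 ⊕ Fin n) → F2u))
    (hD : D = Submodule.span F2u
      ({(Sum.elim ![1, 0] X : (Fin 2 ⊕ Fin n) → F2u)} ∪
        Set.range fun i : Fin k =>
          (Sum.elim ![y i, c * y i] (r i) : (Fin 2 ⊕ Fin n) → F2u))) :
    (D : Set ((Fin 2 ⊕ Fin n) → F2u)) = dualCode (D : Set ((Fin 2 ⊕ Fin n) → F2u)) := by
  subst hgen
  exact extension_selfDual_F2u_general r hsd hc2 hX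
    (by simpa only [CharTwo.neg_eq, hy, dotProduct] using hD)
end

section
/- Let C ⊆ F₂^{2n} (F₂ = ZMod 2) be a self-dual binary code of length 2n (so dim C = n), and let x ∈ F₂^{2n} with x ∉ C and ⟨x,x⟩ = 0. Define D = (⟨x⟩⊥ ∩ C) + span{x}, where ⟨x⟩⊥ = {y ∈ F₂^{2n} : ⟨x,y⟩ = 0}. Then D is a self-dual binary code of length 2n, and D is a neighbour of C, i.e., dim(C ∩ D) = n − 1. -/
/-!
Adjoining to `C⊥` a vector `x` is dual to cutting `C` down by the hyperplane `x⊥`, that is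
`(C ∩ x⊥)⊥ = C⊥ + ⟨x⟩`. Hence if `C⊥ = C`, then `D = (C ∩ x⊥) + ⟨x⟩` has dual
`D⊥ = (C + ⟨x⟩) ∩ x⊥`, and since `⟨x⟩ ⊆ x⊥` the modular law turns this back into `D`.
Moreover `D ⊆ x⊥`, so `C ∩ D = C ∩ x⊥`, which is a hyperplane of `C` because `x ∉ C = C⊥`.
-/

open LinearMap Module Submodule

section BilinForm

variable {R M : Type*} [CommSemiring R] [AddCommMonoid M] [Module R M] {B : LinearMap.BilinForm R M}

theorem orthogonal_sup (N L : Submodule R M) :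
    B.orthogonal (N ⊔ L) = B.orthogonal N ⊓ B.orthogonal L := by
  refine le_antisymm
    (le_inf (BilinForm.orthogonal_le le_sup_left) (BilinForm.orthogonal_le le_sup_right)) ?_
  rintro y ⟨hN, hL⟩ z hz
  obtain ⟨n, hn, l, hl, rfl⟩ := mem_sup.mp hz
  rw [map_add, LinearMap.add_apply, hN n hn, hL l hl, add_zero]

/-- The candidate neighbour `(C ∩ x⊥) + ⟨x⟩` of a submodule `C`, for an arbitrary bilinear form;
the hyperplane `x⊥ = {y | B x y = 0}` is encoded as the kernel of `B x`. -/
def neighbour (B : LinearMap.BilinForm R M) (C : Submodule R M) (x : M) : Submodule R M :=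
  C ⊓ ker (B x) ⊔ R ∙ x

variable {C : Submodule R M} {x : M}

theorem neighbour_le_ker (hxx : B x x = 0) : neighbour B C x ≤ ker (B x) :=
  sup_le inf_le_right ((span_singleton_le_iff_mem x _).mpr hxx)

theorem inf_neighbour (hxx : B x x = 0) : C ⊓ neighbour B C x = C ⊓ ker (B x) :=
  le_antisymm (inf_le_inf_left C (neighbour_le_ker hxx)) (le_inf inf_le_left le_sup_left)

end BilinForm

section VectorSpace

variable {K V : Type*} [Field K] [AddCommGroup V] [Module K V]

theorem exists_eq_smul_of_ker_le_ker {f g : Dual K V} (h : ker f ≤ ker g) :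
    ∃ a : K, g = a • f := by
  have hg : g ∈ span K (Set.range fun _ : Unit ↦ f) :=
    mem_span_of_iInf_ker_le_ker (by simpa using h)
  rw [Set.range_const, mem_span_singleton] at hg
  exact hg.imp fun _ ↦ Eq.symm

theorem finrank_inf_ker_add_one {C : Submodule K V} [FiniteDimensional K C] {f : Dual K V}
    (hf : ¬C ≤ ker f) : finrank K ↥(C ⊓ ker f) + 1 = finrank K C := by
  have hf' : f.domRestrict C ≠ 0 := fun h ↦ hf fun c hc ↦ LinearMap.congr_fun h ⟨c, hc⟩
  rw [← Dual.finrank_ker_add_one_of_ne_zero hf', ker_domRestrict, ← map_comap_subtype,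
    finrank_map_subtype_eq]

variable {B : LinearMap.BilinForm K V} {C : Submodule K V} {x : V}

theorem orthogonal_inf_ker_flip (C : Submodule K V) (x : V) :
    B.orthogonal (C ⊓ ker (B.flip x)) = B.orthogonal C ⊔ K ∙ x := by
  apply le_antisymm
  · intro y hy
    have hker : ker ((B.flip x).domRestrict C) ≤ ker ((B.flip y).domRestrict C) :=
      fun c hc ↦ hy c ⟨c.2, hc⟩
    obtain ⟨a, ha⟩ := exists_eq_smul_of_ker_le_ker hker
    have hya : y - a • x ∈ B.orthogonal C := fun c hc ↦ by
      have hc' : B c y = a * B c x := LinearMap.congr_fun ha ⟨c, hc⟩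
      rw [map_sub, map_smul, hc', smul_eq_mul, sub_self]
    exact mem_sup.mpr ⟨_, hya, a • x, smul_mem _ a (mem_span_singleton_self x), sub_add_cancel ..⟩
  · exact sup_le (BilinForm.orthogonal_le inf_le_left)
      ((span_singleton_le_iff_mem x _).mpr fun _ hc ↦ hc.2)

theorem orthogonal_neighbour (hB : B.IsRefl) (hC : B.orthogonal C = C) (hxx : B x x = 0) :
    B.orthogonal (neighbour B C x) = neighbour B C x := by
  have hflip : ker (B x) = ker (B.flip x) := Submodule.ext fun _ ↦ hB.eq_iff
  have hxker : K ∙ x ≤ ker (B x) := (span_singleton_le_iff_mem x _).mpr hxx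
  calc B.orthogonal (C ⊓ ker (B x) ⊔ K ∙ x)
      = B.orthogonal (C ⊓ ker (B.flip x)) ⊓ B.orthogonal (K ∙ x) := by rw [orthogonal_sup, hflip]
    _ = (C ⊔ K ∙ x) ⊓ ker (B x) := by
      rw [orthogonal_inf_ker_flip, hC, BilinForm.orthogonal_span_singleton_eq_toLin_ker]; rfl
    _ = C ⊓ ker (B x) ⊔ K ∙ x := by rw [sup_comm, sup_inf_assoc_of_le C hxker, sup_comm]

theorem finrank_inf_neighbour_add_one [FiniteDimensional K C] (hB : B.IsRefl)
    (hC : B.orthogonal C ≤ C) (hx : x ∉ C) (hxx : B x x = 0) :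
    finrank K ↥(C ⊓ neighbour B C x) + 1 = finrank K C := by
  rw [inf_neighbour hxx]
  exact finrank_inf_ker_add_one fun h ↦ hx (hC fun c hc ↦ hB x c (h hc))

end VectorSpace

section Code

variable {R ι : Type*} [CommRing R] [Fintype ι]

theorem isRefl_dotProductBilin :
    BilinForm.IsRefl (dotProductBilin R R : LinearMap.BilinForm R (ι → R)) :=
  fun x y h ↦ (dotProduct_comm y x).trans h

theorem dualCode_coe (C : Submodule R (ι → R)) :
    dualCode (C : Set (ι → R)) = BilinForm.orthogonal (dotProductBilin R R) C :=
  Set.ext fun _ ↦ forall₂_congr fun _ _ ↦ isRefl_dotProductBilin.eq_iff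

theorem span_union_singleton_eq_neighbour (C : Submodule R (ι → R)) (x : ι → R) :
    span R ({y | y ∈ C ∧ ∑ i, x i * y i = 0} ∪ {x}) = neighbour (dotProductBilin R R) C x := by
  rw [span_union]
  exact congrArg (· ⊔ R ∙ x) (span_eq (C ⊓ ker (dotProductBilin R R x)))

end Code

theorem neighbour_selfDual_general {K ι : Type*} [Field K] [Fintype ι] (C : Submodule K (ι → K))
    (hsd : (C : Set (ι → K)) = dualCode (C : Set (ι → K)))
    (x : ι → K) (hx : x ∉ C) (hxx : ∑ i, x i * x i = 0) (D : Submodule K (ι → K))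
    (hD : D = span K ({y | y ∈ C ∧ ∑ i, x i * y i = 0} ∪ {x})) :
    (D : Set (ι → K)) = dualCode (D : Set (ι → K)) ∧
      finrank K ↥(C ⊓ D) + 1 = finrank K C := by
  rw [span_union_singleton_eq_neighbour] at hD
  rw [dualCode_coe, SetLike.coe_set_eq] at hsd ⊢
  subst hD
  exact ⟨(orthogonal_neighbour isRefl_dotProductBilin hsd.symm hxx).symm,
    finrank_inf_neighbour_add_one isRefl_dotProductBilin hsd.ge hx hxx⟩

/-- Let `C ⊆ F₂^{2n}` be a self-dual binary code of length `2n` (so `dim C = n`), and let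
`x ∉ C` with `⟨x,x⟩ = 0`. Then `D = (⟨x⟩⊥ ∩ C) + span{x}` is a self-dual binary code of length
`2n` which is a neighbour of `C`, i.e. `dim (C ∩ D) = n - 1`. -/
theorem neighbour_selfDual (n : ℕ) (C : Submodule (ZMod 2) (Fin (2 * n) → ZMod 2))
    (hsd : (C : Set (Fin (2 * n) → ZMod 2)) = dualCode (C : Set (Fin (2 * n) → ZMod 2)))
    (hdim : Module.finrank (ZMod 2) C = n)
    (x : Fin (2 * n) → ZMod 2) (hx : x ∉ C) (hxx : ∑ i, x i * x i = 0)
    (D : Submodule (ZMod 2) (Fin (2 * n) → ZMod 2))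
    (hD : D = Submodule.span (ZMod 2)
      ({y | y ∈ C ∧ ∑ i, x i * y i = 0} ∪ {x})) :
    (D : Set (Fin (2 * n) → ZMod 2)) = dualCode (D : Set (Fin (2 * n) → ZMod 2)) ∧
    Module.finrank (ZMod 2) ↥(C ⊓ D) = n - 1 := by
  obtain ⟨hDsd, hrank⟩ := neighbour_selfDual_general C hsd x hx hxx D hD
  exact ⟨hDsd, by omega⟩
end
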